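/- For every integer n > 2^25, every positive integer N, and every n-linear form U : (ℂ^N)^n → ℂ, one has (∑_{i₁,…,iₙ=1}^N |U(e_{i₁},…,e_{iₙ})|^{2n/(n+1)})^{(n+1)/(2n)} ≤ 0.99135459597 · (n-1)^{0.304975} · ‖U‖. -/

import Mathlib

open Real

/-- The Bohnenblust--Hille quantity of an `n`-linear form on `ℓ_∞^N` over `ℂ`:
`(∑_{i₁,…,iₙ} |U(e_{i₁},…,e_{iₙ})|^{2n/(n+1)})^{(n+1)/(2n)}`. -/
noncomputable def BHcomplex (n N : ℕ)
    (U : ContinuousMultilinearMap ℂ (fun _ : Fin n => (Fin N → ℂ)) ℂ) : ℝ :=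
  (∑ i : Fin n → Fin N,
      ‖U (fun k => Pi.single (i k) (1 : ℂ))‖ ^ ((2 * n : ℝ) / (n + 1)))
    ^ ((n + 1 : ℝ) / (2 * n))


lemma bh_log_le (y : ℝ) (hy : 0 < y) :
    Real.log y ≤ -1.11 + 1.45 * y - 0.31 * y ^ 2 + (2 / 75) * y ^ 3 := by
  set g : ℝ → ℝ := fun y => -1.11 + 1.45 * y - 0.31 * y ^ 2 + (2 / 75) * y ^ 3 - Real.log y with hg
  have hd : ∀ x : ℝ, 0 < x → HasDerivAt g (0.08 * (x - 5/4) * (x - 5/2) * (x - 4) / x) x := by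
    intro x hx
    have h1 : HasDerivAt g (1.45 * 1 - 0.31 * (2 * x) + (2/75) * (3 * x ^ 2) - x⁻¹) x := by
      have h2 : HasDerivAt (fun x : ℝ => x ^ 2) (2 * x) x := by
        simpa using hasDerivAt_pow 2 x
      have h3 : HasDerivAt (fun x : ℝ => x ^ 3) (3 * x ^ 2) x := by
        simpa using hasDerivAt_pow 3 x
      exact ((((hasDerivAt_id x).const_mul 1.45).const_add (-1.11)).sub (h2.const_mul 0.31)).add
        (h3.const_mul (2/75)) |>.sub (Real.hasDerivAt_log hx.ne')
    convert h1 using 1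
    field_simp
    ring
  have hmono : ∀ u v : ℝ, 0 < u → (∀ x, u < x → x < v → 0 ≤ (x - 5/4) * (x - 5/2) * (x - 4)) →
      u ≤ v → g u ≤ g v := by
    intro u v hu h huv
    have : MonotoneOn g (Set.Icc u v) := by
      apply monotoneOn_of_hasDerivWithinAt_nonneg (convex_Icc u v)
        (f' := fun x => (0.08 * (x - 5/4) * (x - 5/2) * (x - 4) / x))
      · intro x hx
        exact (hd x (by linarith [hx.1])).continuousAt.continuousWithinAt
      · intro x hx
        rw [interior_Icc] at hx
        exact (hd x (by linarith [hx.1])).hasDerivWithinAt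
      · intro x hx
        rw [interior_Icc] at hx
        have := h x hx.1 hx.2
        have hx0 : 0 < x := by linarith [hx.1]
        apply div_nonneg _ hx0.le
        nlinarith
    exact this (Set.left_mem_Icc.2 huv) (Set.right_mem_Icc.2 huv) huv
  have hanti : ∀ u v : ℝ, 0 < u → (∀ x, u < x → x < v → (x - 5/4) * (x - 5/2) * (x - 4) ≤ 0) →
      u ≤ v → g v ≤ g u := by
    intro u v hu h huv
    have : AntitoneOn g (Set.Icc u v) := by
      apply antitoneOn_of_hasDerivWithinAt_nonpos (convex_Icc u v)
        (f' := fun x => (0.08 * (x - 5/4) * (x - 5/2) * (x - 4) / x))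
      · intro x hx
        exact (hd x (by linarith [hx.1])).continuousAt.continuousWithinAt
      · intro x hx
        rw [interior_Icc] at hx
        exact (hd x (by linarith [hx.1])).hasDerivWithinAt
      · intro x hx
        rw [interior_Icc] at hx
        have := h x hx.1 hx.2
        have hx0 : 0 < x := by linarith [hx.1]
        apply div_nonpos_of_nonpos_of_nonneg _ hx0.le
        nlinarith
    exact this (Set.left_mem_Icc.2 huv) (Set.right_mem_Icc.2 huv) huv
  have e1 : 0 ≤ g (5/4) := by
    have := Real.log_le_sub_one_of_pos (show (0:ℝ) < 5/4 by norm_num)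
    simp only [hg]
    norm_num at this ⊢
    linarith
  have e2 : 0 ≤ g 4 := by
    have h : Real.log 4 = 2 * Real.log 2 := by
      rw [show (4:ℝ) = 2 ^ 2 by norm_num, Real.log_pow]; norm_num
    have := Real.log_two_lt_d9
    simp only [hg, h]
    norm_num at this ⊢
    linarith
  have key : 0 ≤ g y := by
    rcases le_total y (5/4) with h | h
    · refine e1.trans (hanti y (5/4) hy (fun x h1 h2 => ?_) h)
      have := mul_pos (show 0 < 5/4 - x by linarith) (mul_pos (show 0 < 5/2 - x by linarith) (show 0 < 4 - x by linarith))
      nlinarith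
    rcases le_total y (5/2) with h' | h'
    · refine e1.trans (hmono (5/4) y (by norm_num) (fun x h1 h2 => ?_) h)
      have := mul_pos (show 0 < x - 5/4 by linarith) (mul_pos (show 0 < 5/2 - x by linarith) (show 0 < 4 - x by linarith))
      nlinarith
    rcases le_total y 4 with h'' | h''
    · refine e2.trans (hanti y 4 hy (fun x h1 h2 => ?_) h'')
      have := mul_pos (show 0 < x - 5/4 by linarith) (mul_pos (show 0 < x - 5/2 by linarith) (show 0 < 4 - x by linarith))
      nlinarith
    · refine e2.trans (hmono 4 y (by norm_num) (fun x h1 h2 => ?_) h'')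
      have := mul_pos (show 0 < x - 5/4 by linarith) (mul_pos (show 0 < x - 5/2 by linarith) (show 0 < x - 4 by linarith))
      nlinarith
  simp only [hg] at key
  linarith

/-- fifth roots of unity -/
noncomputable def bhW (k : Fin 5) : ℂ := Complex.exp (2 * π * Complex.I / 5) ^ (k : ℕ)

lemma bhW_prim : IsPrimitiveRoot (Complex.exp (2 * π * Complex.I / 5)) 5 := by
  simpa using Complex.isPrimitiveRoot_exp 5 (by norm_num)

lemma bhW_norm (k : Fin 5) : ‖bhW k‖ = 1 := by
  unfold bhW
  rw [norm_pow, bhW_prim.norm'_eq_one (by norm_num), one_pow]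

lemma bhW_conj (k : Fin 5) : bhW k * (starRingEnd ℂ) (bhW k) = 1 := by
  rw [Complex.mul_conj, Complex.normSq_eq_norm_sq, bhW_norm]; simp

lemma bhW_sum (j : ℕ) (h0 : 0 < j) (h5 : j < 5) : ∑ k, bhW k ^ j = 0 := by
  have h := (bhW_prim.pow_of_coprime j (by interval_cases j <;> norm_num)).geom_sum_eq_zero (by norm_num)
  rw [← h, ← Fin.sum_univ_eq_sum_range]
  apply Finset.sum_congr rfl
  intro k _
  simp only [bhW, ← pow_mul, mul_comm]

lemma bhW_sum' (j : ℕ) (h0 : 0 < j) (h5 : j < 5) : ∑ k, (starRingEnd ℂ) (bhW k) ^ j = 0 := by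
  have := congrArg (starRingEnd ℂ) (bhW_sum j h0 h5)
  simpa using this

/-- one step moments -/
lemma bh_step (S a : ℂ) : 
    let X := ‖S‖ ^ 2
    let Y := ‖a‖ ^ 2
    (∑ k, (‖S + a * bhW k‖ ^ 2) = 5 * (X + Y)) ∧
    (∑ k, (‖S + a * bhW k‖ ^ 2) ^ 2 = 5 * (X ^ 2 + 4 * X * Y + Y ^ 2)) ∧
    (∑ k, (‖S + a * bhW k‖ ^ 2) ^ 3 = 5 * (X ^ 3 + 9 * X ^ 2 * Y + 9 * X * Y ^ 2 + Y ^ 3)) ∧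
    (∑ k, (‖S + a * bhW k‖ ^ 2) ^ 4 = 5 * (X ^ 4 + 16 * X ^ 3 * Y + 36 * X ^ 2 * Y ^ 2
      + 16 * X * Y ^ 3 + Y ^ 4)) := by
  intro X Y
  set u : ℂ := (starRingEnd ℂ) S * a with hu
  set v : ℂ := S * (starRingEnd ℂ) a with hv
  set D : ℂ := (X : ℂ) + Y with hD
  have hX : (X : ℂ) = S * (starRingEnd ℂ) S := by
    rw [Complex.mul_conj, Complex.normSq_eq_norm_sq]
  have hY : (Y : ℂ) = a * (starRingEnd ℂ) a := by
    rw [Complex.mul_conj, Complex.normSq_eq_norm_sq]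
  have huv : u * v = X * Y := by rw [hX, hY, hu, hv]; ring
  have hy : ∀ k, ((‖S + a * bhW k‖ ^ 2 : ℝ) : ℂ) =
      D + u * bhW k + v * (starRingEnd ℂ) (bhW k) := by
    intro k
    rw [← Complex.normSq_eq_norm_sq, ← Complex.mul_conj, map_add, map_mul, hD, hX, hY, hu, hv]
    linear_combination a * (starRingEnd ℂ) a * bhW_conj k
  have p1 := bhW_sum 1 (by norm_num) (by norm_num)
  have p2 := bhW_sum 2 (by norm_num) (by norm_num)
  have p3 := bhW_sum 3 (by norm_num) (by norm_num)
  have p4 := bhW_sum 4 (by norm_num) (by norm_num)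
  have q1 := bhW_sum' 1 (by norm_num) (by norm_num)
  have q2 := bhW_sum' 2 (by norm_num) (by norm_num)
  have q3 := bhW_sum' 3 (by norm_num) (by norm_num)
  have q4 := bhW_sum' 4 (by norm_num) (by norm_num)
  have gen : ∀ c0 c1 c2 c3 c4 d1 d2 d3 d4 : ℂ,
      ∑ k, (c0 + c1 * bhW k ^ 1 + c2 * bhW k ^ 2 + c3 * bhW k ^ 3 + c4 * bhW k ^ 4
        + d1 * (starRingEnd ℂ) (bhW k) ^ 1 + d2 * (starRingEnd ℂ) (bhW k) ^ 2
        + d3 * (starRingEnd ℂ) (bhW k) ^ 3 + d4 * (starRingEnd ℂ) (bhW k) ^ 4) = 5 * c0 := by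
    intros
    simp only [Finset.sum_add_distrib, ← Finset.mul_sum, p1, p2, p3, p4, q1, q2, q3, q4]
    simp
  refine ⟨?_, ?_, ?_, ?_⟩
  · apply Complex.ofReal_injective
    push_cast [← Complex.ofReal_pow]
    rw [← hD, ← gen D u 0 0 0 v 0 0 0]
    refine Finset.sum_congr rfl fun k _ => ?_
    rw [hy k]; ring
  · apply Complex.ofReal_injective
    push_cast
    rw [show (X:ℂ)^2 + 4 * X * Y + Y^2 = D ^ 2 + 2 * (u * v) by rw [huv, hD]; ring]
    rw [← gen _ (2 * D * u) (u ^ 2) 0 0 (2 * D * v) (v ^ 2) 0 0]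
    refine Finset.sum_congr rfl fun k _ => ?_
    have := hy k
    push_cast at this
    have hw := bhW_conj k
    rw [this]
    generalize (starRingEnd ℂ) (bhW k) = w' at *
    linear_combination 2 * u * v * hw
  · apply Complex.ofReal_injective
    push_cast
    rw [show (X:ℂ)^3 + 9 * X ^ 2 * Y + 9 * X * Y^2 + Y ^ 3 = D ^ 3 + 6 * D * (u * v) by rw [huv, hD]; ring]
    rw [← gen _ (3 * D ^ 2 * u + 3 * u ^ 2 * v) (3 * D * u ^ 2) (u ^ 3) 0
       (3 * D ^ 2 * v + 3 * u * v ^ 2) (3 * D * v ^ 2) (v ^ 3) 0]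
    refine Finset.sum_congr rfl fun k _ => ?_
    have := hy k
    push_cast at this
    have hw := bhW_conj k
    rw [this]
    generalize (starRingEnd ℂ) (bhW k) = w' at *
    linear_combination (6 * D * u * v + 3 * u ^ 2 * v * bhW k + 3 * u * v ^ 2 * w') * hw
  · apply Complex.ofReal_injective
    push_cast
    rw [show (X:ℂ)^4 + 16 * X ^ 3 * Y + 36 * X ^ 2 * Y^2 + 16 * X * Y ^ 3 + Y ^ 4
        = D ^ 4 + 12 * D ^ 2 * (u * v) + 6 * (u * v) ^ 2 by rw [huv, hD]; ring]
    rw [← gen _ (4 * D ^ 3 * u + 12 * D * u ^ 2 * v) (6 * D ^ 2 * u ^ 2 + 4 * u ^ 3 * v)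
       (4 * D * u ^ 3) (u ^ 4)
       (4 * D ^ 3 * v + 12 * D * v ^ 2 * u) (6 * D ^ 2 * v ^ 2 + 4 * v ^ 3 * u)
       (4 * D * v ^ 3) (v ^ 4)]
    refine Finset.sum_congr rfl fun k _ => ?_
    have := hy k
    push_cast at this
    have hw := bhW_conj k
    rw [this]
    generalize (starRingEnd ℂ) (bhW k) = w' at *
    generalize bhW k = w at *
    linear_combination (12 * D ^ 2 * u * v + 12 * D * u ^ 2 * v * w + 12 * D * u * v ^ 2 * w'
      + 4 * u ^ 3 * v * w ^ 2 + 4 * u * v ^ 3 * w' ^ 2 + 6 * u ^ 2 * v ^ 2 * (w * w' + 1)) * hw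


lemma bh_sum_cons (N : ℕ) (f : (Fin (N+1) → Fin 5) → ℝ) :
    ∑ ε, f ε = ∑ ε : Fin N → Fin 5, ∑ k, f (Fin.cons k ε) := by
  rw [← (Fin.consEquiv (fun _ : Fin (N+1) => Fin 5)).sum_comp, Fintype.sum_prod_type_right]
  rfl

lemma bh_moments (N : ℕ) (a : Fin N → ℂ) :
    (∑ ε : Fin N → Fin 5, (‖∑ j, a j * bhW (ε j)‖ ^ 2) = 5 ^ N * ∑ j, ‖a j‖ ^ 2) ∧
    (∑ ε : Fin N → Fin 5, (‖∑ j, a j * bhW (ε j)‖ ^ 2) ^ 2 = 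
      5 ^ N * (2 * (∑ j, ‖a j‖ ^ 2) ^ 2 - ∑ j, (‖a j‖ ^ 2) ^ 2)) ∧
    (∑ ε : Fin N → Fin 5, (‖∑ j, a j * bhW (ε j)‖ ^ 2) ^ 3 = 
      5 ^ N * (6 * (∑ j, ‖a j‖ ^ 2) ^ 3 - 9 * (∑ j, ‖a j‖ ^ 2) * (∑ j, (‖a j‖ ^ 2) ^ 2)
        + 4 * ∑ j, (‖a j‖ ^ 2) ^ 3)) ∧
    (∑ ε : Fin N → Fin 5, (‖∑ j, a j * bhW (ε j)‖ ^ 2) ^ 4 = 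
      5 ^ N * (24 * (∑ j, ‖a j‖ ^ 2) ^ 4 - 72 * (∑ j, ‖a j‖ ^ 2) ^ 2 * (∑ j, (‖a j‖ ^ 2) ^ 2)
        + 64 * (∑ j, ‖a j‖ ^ 2) * (∑ j, (‖a j‖ ^ 2) ^ 3) + 18 * (∑ j, (‖a j‖ ^ 2) ^ 2) ^ 2
        - 33 * ∑ j, (‖a j‖ ^ 2) ^ 4)) := by
  induction N with
  | zero => simp
  | succ N ih =>
    obtain ⟨h1, h2, h3, h4⟩ := ih (fun j => a j.succ)
    have e : ∀ (k : Fin 5) (ε : Fin N → Fin 5), 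
        ∑ j, a j * bhW ((Fin.cons k ε : Fin (N+1) → Fin 5) j) =
        (∑ j : Fin N, a j.succ * bhW (ε j)) + a 0 * bhW k := by
      intro k ε
      rw [Fin.sum_univ_succ]; simp [add_comm]
    have h0 : ∑ ε : Fin N → Fin 5, (1:ℝ) = 5 ^ N := by simp
    have r1 : ∑ j, ‖a j‖ ^ 2 = ‖a 0‖ ^ 2 + ∑ j : Fin N, ‖a j.succ‖ ^ 2 := Fin.sum_univ_succ _
    have r2 : ∑ j, (‖a j‖ ^ 2) ^ 2 = (‖a 0‖ ^ 2) ^ 2 + ∑ j : Fin N, (‖a j.succ‖ ^ 2) ^ 2 := Fin.sum_univ_succ _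
    have r3 : ∑ j, (‖a j‖ ^ 2) ^ 3 = (‖a 0‖ ^ 2) ^ 3 + ∑ j : Fin N, (‖a j.succ‖ ^ 2) ^ 3 := Fin.sum_univ_succ _
    have r4 : ∑ j, (‖a j‖ ^ 2) ^ 4 = (‖a 0‖ ^ 2) ^ 4 + ∑ j : Fin N, (‖a j.succ‖ ^ 2) ^ 4 := Fin.sum_univ_succ _
    rw [r1, r2, r3, r4]
    refine ⟨?_, ?_, ?_, ?_⟩
    · rw [bh_sum_cons]
      simp only [e, (bh_step _ _).1, Finset.sum_add_distrib, ← Finset.mul_sum, ← Finset.sum_mul, h1]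
      simp
      ring
    · rw [bh_sum_cons]
      simp only [e, (bh_step _ _).2.1, Finset.sum_add_distrib, ← Finset.mul_sum, ← Finset.sum_mul, h1, h2]
      simp
      ring
    · rw [bh_sum_cons]
      simp only [e, (bh_step _ _).2.2.1, Finset.sum_add_distrib, ← Finset.mul_sum, ← Finset.sum_mul, mul_assoc (9:ℝ), h1, h2, h3]
      simp
      ring
    · rw [bh_sum_cons]
      simp only [e, (bh_step _ _).2.2.2, Finset.sum_add_distrib, ← Finset.mul_sum, ← Finset.sum_mul, mul_assoc (16:ℝ), mul_assoc (36:ℝ), h1, h2, h3, h4]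
      simp
      ring

/-- Khinchine inequality -/
lemma bh_khinchine (N : ℕ) (a : Fin N → ℂ) (p : ℝ) (hp : 0 < p) (hp2 : p ≤ 2) :
    5 ^ N * (Real.exp (-0.57 * (1 - p / 2)) * (∑ j, ‖a j‖ ^ 2) ^ (p / 2)) ≤
    ∑ ε : Fin N → Fin 5, ‖∑ j, a j * bhW (ε j)‖ ^ p := by
  obtain ⟨h1, h2, h3, h4⟩ := bh_moments N a
  set σ := ∑ j, ‖a j‖ ^ 2 with hσ
  have hσ0 : 0 ≤ σ := Finset.sum_nonneg fun _ _ => by positivity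
  rcases hσ0.eq_or_lt with h | hpos
  · rw [← h, Real.zero_rpow (by positivity)]
    simp only [mul_zero]
    exact Finset.sum_nonneg fun _ _ => by positivity
  set m2 := ∑ j, (‖a j‖ ^ 2) ^ 2 with hm2
  set m3 := ∑ j, (‖a j‖ ^ 2) ^ 3 with hm3
  set m4 := ∑ j, (‖a j‖ ^ 2) ^ 4 with hm4
  set s := 1 - p / 2 with hs
  have hs0 : 0 ≤ s := by rw [hs]; linarith
  have pw : ∀ ε : Fin N → Fin 5, 
      (Real.exp (-0.57 * s) * σ ^ (p/2)) * (
        (1 + s * 1.68) * ((‖∑ j, a j * bhW (ε j)‖ ^ 2) / σ)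
        - s * (1.45 * ((‖∑ j, a j * bhW (ε j)‖ ^ 2) ^ 2 / σ ^ 2)
        - 0.31 * ((‖∑ j, a j * bhW (ε j)‖ ^ 2) ^ 3 / σ ^ 3)
        + (2/75) * ((‖∑ j, a j * bhW (ε j)‖ ^ 2) ^ 4 / σ ^ 4))) ≤
      ‖∑ j, a j * bhW (ε j)‖ ^ p := by
    intro ε
    set x := ‖∑ j, a j * bhW (ε j)‖ with hx
    have hx0 : 0 ≤ x := norm_nonneg _
    rcases hx0.eq_or_lt with h | hxp
    · rw [← h, Real.zero_rpow hp.ne']; simp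
    have hy : 0 < x ^ 2 / σ := by positivity
    have e1 : x ^ p = σ ^ (p/2) * ((x ^ 2 / σ) * Real.exp (-s * Real.log (x^2/σ))) := by
      have : Real.exp (-s * Real.log (x^2/σ)) = (x^2/σ) ^ (-s) := by
        rw [Real.rpow_def_of_pos hy, mul_comm]
      rw [this]
      have h7 : (x^2/σ) * (x^2/σ) ^ (-s) = (x^2/σ) ^ (p/2) := by
        rw [show p / 2 = 1 + -s by rw [hs]; ring, Real.rpow_add hy, Real.rpow_one]
      rw [h7, ← Real.mul_rpow hσ0 hy.le, mul_div_cancel₀ _ hpos.ne', ← Real.rpow_natCast x 2, ← Real.rpow_mul hx0]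
      congr 1
      push_cast
      ring
    rw [e1, mul_comm (Real.exp _), mul_assoc]
    refine mul_le_mul_of_nonneg_left ?_ (by positivity)
    have l := bh_log_le _ hy
    set y := x^2/σ with hyd
    have e2 : Real.exp (-s * Real.log y) = Real.exp (-0.57 * s) * Real.exp (-s * (Real.log y - 0.57)) := by
      rw [← Real.exp_add]; congr 1; ring
    have e3 := Real.add_one_le_exp (-s * (Real.log y - 0.57))
    have e4 : 1 + s * 1.68 - s * (1.45 * y - 0.31 * y ^ 2 + (2/75) * y ^ 3) ≤ 
        Real.exp (-s * (Real.log y - 0.57)) := by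
      refine le_trans ?_ e3
      nlinarith [mul_le_mul_of_nonneg_left l hs0]
    rw [e2, ← div_pow, ← div_pow, ← div_pow, ← hyd]
    calc _ = Real.exp (-0.57 * s) * (y * (1 + s * 1.68 - s * (1.45 * y - 0.31 * y ^ 2 + (2/75) * y ^ 3))) := by ring
      _ ≤ Real.exp (-0.57 * s) * (y * Real.exp (-s * (Real.log y - 0.57))) := by gcongr
      _ = _ := by ring
  refine le_trans ?_ (Finset.sum_le_sum fun ε _ => pw ε)
  rw [← Finset.mul_sum]
  simp only [Finset.sum_add_distrib, Finset.sum_sub_distrib, ← Finset.mul_sum, ← Finset.sum_div, h1, h2, h3, h4]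
  have cs : m2 ^ 2 ≤ σ * m3 := by
    rw [hm2, hσ, hm3]
    apply Finset.sum_sq_le_sum_mul_sum_of_sq_le_mul
    · intros; positivity
    · intros; positivity
    · intros; exact le_of_eq (by ring)
  have neg : 0 ≤ 0.58 * m2 * σ^2 - 0.947 * m3 * σ + 0.88 * m4 := by
    have : 0.58 * m2 * σ^2 - 0.947 * m3 * σ + 0.88 * m4 = 
       ∑ j, (‖a j‖ ^ 2) ^ 2 * (0.58 * σ ^ 2 - 0.947 * σ * (‖a j‖ ^ 2) + 0.88 * (‖a j‖^2) ^ 2) := by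
      simp only [mul_add, mul_sub, Finset.sum_add_distrib, Finset.sum_sub_distrib, hm2, hm3, hm4, Finset.mul_sum, Finset.sum_mul]
      congr 1
      congr 1
      all_goals exact Finset.sum_congr rfl fun _ _ => by ring
    rw [this]
    refine Finset.sum_nonneg fun j _ => mul_nonneg (by positivity) ?_
    nlinarith [sq_nonneg (0.94 * (‖a j‖^2) - 0.947/(2*0.94) * σ), sq_nonneg σ, sq_nonneg (‖a j‖^2)]
  have m30 : 0 ≤ m3 := Finset.sum_nonneg fun _ _ => by positivity
  have key : 0 ≤ 2.9 - 1.86 + 0.64 - (1.45 * ((2 * σ ^ 2 - m2) / σ ^ 2) - 0.31 * ((6 * σ ^ 3 - 9 * σ * m2 + 4 * m3) / σ ^ 3)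
     + 2/75 * ((24 * σ ^ 4 - 72 * σ ^ 2 * m2 + 64 * σ * m3 + 18 * m2 ^ 2 - 33 * m4) / σ ^ 4)) := by
    have : 2.9 - 1.86 + 0.64 - (1.45 * ((2 * σ ^ 2 - m2) / σ ^ 2) - 0.31 * ((6 * σ ^ 3 - 9 * σ * m2 + 4 * m3) / σ ^ 3)
     + 2/75 * ((24 * σ ^ 4 - 72 * σ ^ 2 * m2 + 64 * σ * m3 + 18 * m2 ^ 2 - 33 * m4) / σ ^ 4)) = 
     (0.58 * m2 * σ ^ 2 - (64 * 2 / 75 - 1.24) * m3 * σ - 0.48 * m2 ^ 2 + 0.88 * m4) / σ ^ 4 := by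
      field_simp
      ring
    rw [this]
    apply div_nonneg _ (by positivity)
    nlinarith [mul_nonneg m30 hσ0]
  have fin : (5:ℝ) ^ N * 1 ≤ (1 + s * 1.68) * (5 ^ N * σ / σ) -
      s * (1.45 * (5 ^ N * (2 * σ ^ 2 - m2) / σ ^ 2) - 0.31 * (5 ^ N * (6 * σ ^ 3 - 9 * σ * m2 + 4 * m3) / σ ^ 3)
     + 2/75 * (5 ^ N * (24 * σ ^ 4 - 72 * σ ^ 2 * m2 + 64 * σ * m3 + 18 * m2 ^ 2 - 33 * m4) / σ ^ 4)) := by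
    rw [mul_div_assoc, div_self hpos.ne']
    have h5 : (0:ℝ) ≤ 5 ^ N * s := by positivity
    have := mul_nonneg h5 key
    simp only [mul_div_assoc]
    nlinarith
  have hc : 0 ≤ Real.exp (-0.57 * s) * σ ^ (p/2) := by positivity
  calc _ = (Real.exp (-0.57 * s) * σ ^ (p/2)) * (5 ^ N * 1) := by ring
    _ ≤ _ := mul_le_mul_of_nonneg_left fin hc


lemma bh_LW_nn (n N : ℕ) (hn : 1 ≤ n) (f : (Fin (n+1) → Fin N) → NNReal) :
    ∑ i, ∏ k, (∑ t, f (Function.update i k t)) ^ ((1:ℝ) / n) ≤ (∑ i, f i) ^ (1 + (1:ℝ) / n) := by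
  have hn' : (0:ℝ) < n := by exact_mod_cast hn
  have := MeasureTheory.lintegral_mul_prod_lintegral_pow_le (ι := Fin (n+1)) (A := fun _ => Fin N)
    (fun _ => MeasureTheory.Measure.count) (p := (1:ℝ)/n) (by positivity)
    (by simp [hn'.ne']) (f := fun i => (f i : ENNReal)) (measurable_of_countable _)
  have h0 : (1:ℝ) - ((Fintype.card (Fin (n+1)) : ℝ) - 1) * (1 / n) = 0 := by
    simp [hn'.ne']
  simp only [h0, MeasureTheory.lintegral_fintype, MeasureTheory.Measure.pi_singleton, 
    MeasureTheory.Measure.count_singleton, Finset.prod_const_one, mul_one, ENNReal.rpow_zero, one_mul] at this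
  have hp1 : (0:ℝ) ≤ 1 / n := by positivity
  have hp2 : (0:ℝ) ≤ 1 + 1 / n := by positivity
  simp only [← ENNReal.coe_finsetSum, ← ENNReal.coe_rpow_of_nonneg _ hp1, 
    ← ENNReal.coe_rpow_of_nonneg _ hp2, ← ENNReal.coe_finsetProd, ENNReal.coe_le_coe] at this
  exact this

lemma bh_LW (n N : ℕ) (hn : 1 ≤ n) (f : (Fin (n+1) → Fin N) → ℝ) (hf : ∀ i, 0 ≤ f i) :
    ∑ i, ∏ k, (∑ t, f (Function.update i k t)) ^ ((1:ℝ) / n) ≤ (∑ i, f i) ^ (1 + (1:ℝ) / n) := by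
  lift f to (Fin (n+1) → Fin N) → NNReal using hf
  beta_reduce
  exact_mod_cast bh_LW_nn n N hn f

lemma bh_gibbs {I : Type*} [Fintype I] (b T : I → ℝ) (hb : ∀ i, 0 ≤ b i) (hT : ∀ i, 0 ≤ T i)
    (hbT : ∀ i, 0 < b i → 0 < T i) (hs : ∑ i, T i ≤ ∑ i, b i) :
    ∑ i, b i * Real.log (T i) ≤ ∑ i, b i * Real.log (b i) := by
  have : ∀ i, b i * Real.log (T i) - b i * Real.log (b i) ≤ T i - b i := by
    intro i
    rcases (hb i).eq_or_lt with h | h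
    · rw [← h]; simpa using hT i
    · have h1 := Real.log_le_sub_one_of_pos (div_pos (hbT i h) h)
      rw [Real.log_div (hbT i h).ne' h.ne'] at h1
      have h2 := mul_le_mul_of_nonneg_left h1 h.le
      have h3 : b i * (T i / b i - 1) = T i - b i := by field_simp
      linarith
  have h := Finset.sum_le_sum fun i (_ : i ∈ Finset.univ) => this i
  simp only [Finset.sum_sub_distrib] at h
  linarith

lemma bh_sum_ins {n N : ℕ} (k : Fin (n+1)) (f : (Fin (n+1) → Fin N) → ℝ) :
    ∑ i, f i = ∑ i' : Fin n → Fin N, ∑ t, f (k.insertNth t i') := by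
  rw [← (Fin.insertNthEquiv (fun _ : Fin (n+1) => Fin N) k).sum_comp, Fintype.sum_prod_type_right]
  rfl

set_option maxHeartbeats 2000000 in
lemma bh_blei (n N : ℕ) (hn : 1 ≤ n) (a : (Fin (n+1) → Fin N) → ℝ) (ha : ∀ i, 0 ≤ a i)
    (D : ℝ) (hD : 0 ≤ D)
    (hW : ∀ k : Fin (n+1), ∑ i' : Fin n → Fin N, (∑ t, a (k.insertNth t i') ^ 2) ^ ((n:ℝ)/(n+1))
      ≤ D ^ (2 * ((n:ℝ)/(n+1)))) :
    ∑ i, a i ^ (2 * ((n:ℝ)+1) / (n + 2)) ≤ D ^ (2 * ((n:ℝ)+1) / (n + 2)) := by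
  have hn' : (0:ℝ) < n := by exact_mod_cast hn
  set ρ : ℝ := 2 * ((n:ℝ)+1) / (n + 2) with hρ
  have hρ0 : 0 < ρ := by positivity
  set q : ℝ := (n:ℝ)/(n+1) with hq
  have hq0 : 0 < q := by positivity
  set b : (Fin (n+1) → Fin N) → ℝ := fun i => a i ^ ρ with hb
  have hb0 : ∀ i, 0 ≤ b i := fun i => Real.rpow_nonneg (ha i) _
  have hba : ∀ i, 0 < b i → 0 < a i := by
    intro i h
    rcases (ha i).eq_or_lt with h' | h'
    · simp [hb, ← h', Real.zero_rpow hρ0.ne'] at h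
    · exact h'
  set S := ∑ i, b i with hS
  have hS0 : 0 ≤ S := Finset.sum_nonneg fun i _ => hb0 i
  rcases hS0.eq_or_lt with h | hSpos
  · rw [← h]; positivity
  set G : Fin (n+1) → (Fin n → Fin N) → ℝ := fun k i' => ∑ t, a (k.insertNth t i') ^ 2 with hG
  set M : Fin (n+1) → (Fin n → Fin N) → ℝ := fun k i' => ∑ t, b (k.insertNth t i') with hM
  set W : Fin (n+1) → ℝ := fun k => ∑ i', (G k i') ^ q with hWd
  have hG0 : ∀ k i', 0 ≤ G k i' := fun k i' => Finset.sum_nonneg fun _ _ => by positivity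
  have hM0 : ∀ k i', 0 ≤ M k i' := fun k i' => Finset.sum_nonneg fun _ _ => hb0 _
  have hMS : ∀ k, ∑ i', M k i' = S := fun k => (bh_sum_ins k b).symm
  have hMp : ∀ k i, 0 < b i → 0 < M k (k.removeNth i) := by
    intro k i h
    refine lt_of_lt_of_le h ?_
    have := Finset.single_le_sum (f := fun t => b (k.insertNth t (k.removeNth i))) (fun t _ => hb0 _) (Finset.mem_univ (i k))
    simpa [hM] using this
  have hGp : ∀ k i, 0 < b i → 0 < G k (k.removeNth i) := by
    intro k i h
    refine lt_of_lt_of_le (pow_pos (hba i h) 2) ?_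
    have := Finset.single_le_sum (f := fun t => a (k.insertNth t (k.removeNth i)) ^ 2) (fun t _ => by positivity) (Finset.mem_univ (i k))
    simpa [hG] using this
  obtain ⟨i0, hi0⟩ : ∃ i, 0 < b i := by
    by_contra hcon
    push Not at hcon
    have : S ≤ 0 := Finset.sum_nonpos fun i _ => hcon i
    linarith
  have hWp : ∀ k, 0 < W k := by
    intro k
    refine lt_of_lt_of_le (Real.rpow_pos_of_pos (hGp k i0 hi0) q) ?_
    exact Finset.single_le_sum (f := fun i' => G k i' ^ q) (fun t _ => Real.rpow_nonneg (hG0 _ _) _) (Finset.mem_univ (k.removeNth i0))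
  have hDp : 0 < D := by
    rcases hD.eq_or_lt with h | h
    · have h1 := (hWp 0).trans_le (hW 0)
      rw [← h, Real.zero_rpow (by positivity)] at h1
      exact absurd h1 (lt_irrefl _)
    · exact h
  -- weighted logs
  set A := ∑ i, b i * Real.log (a i) with hA
  set g : Fin (n+1) → ℝ := fun k => ∑ i, b i * Real.log (G k (k.removeNth i)) with hg
  set m : Fin (n+1) → ℝ := fun k => ∑ i, b i * Real.log (M k (k.removeNth i)) with hm
  have hent : ∑ i, b i * Real.log (b i) = ρ * A := by
    rw [hA, Finset.mul_sum]
    refine Finset.sum_congr rfl fun i _ => ?_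
    rcases (hb0 i).eq_or_lt with h | h
    · rw [← h]; simp
    · have : Real.log (b i) = ρ * Real.log (a i) := Real.log_rpow (hba i h) ρ
      rw [this]; ring
  have Q : ∀ k, S * Real.log S + q * g k - S * Real.log (W k) - m k ≤ 0 := by
    intro k
    have := bh_gibbs b (fun i => S * G k (k.removeNth i) ^ q / W k * (b i / M k (k.removeNth i))) hb0
      (fun i => by have := hG0 k (k.removeNth i); have := hM0 k (k.removeNth i); have := hb0 i; have := hWp k; positivity)
      (fun i h => by have := hGp k i h; have := hMp k i h; have := hWp k; positivity)
      (by
        rw [bh_sum_ins k]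
        simp only [Fin.removeNth_insertNth, ← Finset.mul_sum, ← Finset.sum_div]
        have : ∀ i', S * G k i' ^ q / W k * ((∑ t, b (k.insertNth t i')) / M k i') ≤ S / W k * G k i' ^ q := by
          intro i'
          have h1 : (∑ t, b (k.insertNth t i')) / M k i' ≤ 1 := div_self_le_one _
          have h2 : 0 ≤ S * G k i' ^ q / W k := by
            have := hG0 k i'; have := hWp k; positivity
          calc _ ≤ S * G k i' ^ q / W k * 1 := mul_le_mul_of_nonneg_left h1 h2
            _ = _ := by ring
        refine (Finset.sum_le_sum fun i' _ => this i').trans ?_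
        rw [← Finset.mul_sum]
        exact le_of_eq (div_mul_cancel₀ _ (hWp k).ne'))
    have e : ∀ i, b i * Real.log (S * G k (k.removeNth i) ^ q / W k * (b i / M k (k.removeNth i)))
       = b i * Real.log S + q * (b i * Real.log (G k (k.removeNth i))) - b i * Real.log (W k) + b i * Real.log (b i)
         - b i * Real.log (M k (k.removeNth i)) := by
      intro i
      rcases (hb0 i).eq_or_lt with h | h
      · rw [← h]; simp
      have h1 := hGp k i h
      have h2 := hMp k i h
      have h3 := hWp k
      rw [Real.log_mul (by positivity) (by positivity), Real.log_div (by positivity) h3.ne', Real.log_mul hSpos.ne' (by positivity), 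
        Real.log_rpow h1, Real.log_div h.ne' h2.ne']
      ring
    simp only [e, Finset.sum_add_distrib, Finset.sum_sub_distrib, ← Finset.mul_sum, ← Finset.sum_mul] at this
    simp only [hg, hm]
    linarith
  have R : ∀ k, m k + 2 * A - g k ≤ ρ * A := by
    intro k
    have := bh_gibbs b (fun i => M k (k.removeNth i) * (a i ^ 2 / G k (k.removeNth i))) hb0
      (fun i => by have := hG0 k (k.removeNth i); have := hM0 k (k.removeNth i); positivity)
      (fun i h => by have := hGp k i h; have := hMp k i h; have := hba i h; positivity)
      (by
        rw [bh_sum_ins k]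
        simp only [Fin.removeNth_insertNth, ← Finset.mul_sum, ← Finset.sum_div]
        rw [← hS, ← hMS k]
        refine Finset.sum_le_sum fun i' _ => ?_
        exact mul_le_of_le_one_right (hM0 k i') (div_self_le_one _))
    have e : ∀ i, b i * Real.log (M k (k.removeNth i) * (a i ^ 2 / G k (k.removeNth i)))
       = b i * Real.log (M k (k.removeNth i)) + 2 * (b i * Real.log (a i)) - (b i * Real.log (G k (k.removeNth i))) := by
      intro i
      rcases (hb0 i).eq_or_lt with h | h
      · rw [← h]; simp
      have h1 := hGp k i h
      have h2 := hMp k i h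
      have h3 := hba i h
      rw [Real.log_mul (by positivity) (by positivity), Real.log_div (by positivity) h1.ne', Real.log_pow]
      push_cast
      ring
    simp only [e, Finset.sum_add_distrib, Finset.sum_sub_distrib, ← Finset.mul_sum, hent] at this
    simp only [hg, hm]
    linarith
  have T0 : (1/(n:ℝ)) * ∑ k, m k - (1/(n:ℝ)) * (S * Real.log S) ≤ ρ * A := by
    have hlw := bh_LW n N hn b hb0
    rw [← hS] at hlw
    have eM : ∀ i k, ∑ t, b (Function.update i k t) = M k (k.removeNth i) := by
      intro i k; simp only [hM, Fin.insertNth_removeNth]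
    simp only [eM] at hlw
    have hSr := Real.rpow_pos_of_pos hSpos ((1:ℝ)/n)
    have := bh_gibbs b (fun i => (∏ k, (M k (k.removeNth i)) ^ ((1:ℝ)/n)) / S ^ ((1:ℝ)/n)) hb0
      (fun i => div_nonneg (Finset.prod_nonneg fun k _ => Real.rpow_nonneg (hM0 _ _) _) hSr.le)
      (fun i h => div_pos (Finset.prod_pos fun k _ => Real.rpow_pos_of_pos (hMp k i h) _) hSr)
      (by
        rw [← Finset.sum_div, div_le_iff₀ hSr, ← hS]
        refine hlw.trans (le_of_eq ?_)
        rw [Real.rpow_add hSpos, Real.rpow_one])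
    have e : ∀ i, b i * Real.log ((∏ k, (M k (k.removeNth i)) ^ ((1:ℝ)/n)) / S ^ ((1:ℝ)/n))
       = (1/(n:ℝ)) * ∑ k, b i * Real.log (M k (k.removeNth i)) - (1/(n:ℝ)) * (b i * Real.log S) := by
      intro i
      rcases (hb0 i).eq_or_lt with h | h
      · rw [← h]; simp
      rw [Real.log_div (Finset.prod_pos fun k _ => Real.rpow_pos_of_pos (hMp k i h) _).ne' hSr.ne',
        Real.log_prod (fun k _ => (Real.rpow_pos_of_pos (hMp k i h) _).ne'), Real.log_rpow hSpos, ← Finset.mul_sum]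
      simp only [Real.log_rpow (hMp _ i h), ← Finset.mul_sum]
      ring
    simp only [e, Finset.sum_sub_distrib, ← Finset.mul_sum, ← Finset.sum_mul, hent] at this
    have hsm : ∑ k, m k = ∑ i, b i * ∑ k, Real.log (M k (k.removeNth i)) := by
      simp only [hm]
      rw [Finset.sum_comm]
      simp only [Finset.mul_sum]
    rw [hsm]
    exact this
  have hw : ∀ k, Real.log (W k) ≤ 2 * q * Real.log D := by
    intro k
    have := Real.log_le_log (hWp k) (hW k)
    rwa [Real.log_rpow hDp] at this
  -- combine
  have C : ∀ k, S * Real.log S - (1 - q) * m k + q * ((2 - ρ) * A) - S * (2 * q * Real.log D) ≤ 0 := by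
    intro k
    have h1 := Q k
    have h2 := mul_le_mul_of_nonneg_left (R k) hq0.le
    have h3 := mul_le_mul_of_nonneg_left (hw k) hS0
    nlinarith
  have CS := Finset.sum_le_sum fun k (_ : k ∈ Finset.univ) => C k
  simp only [Finset.sum_add_distrib, Finset.sum_sub_distrib, ← Finset.mul_sum, Finset.sum_const, Finset.card_univ, Fintype.card_fin, nsmul_eq_mul] at CS
  set sm := ∑ k, m k with hsm
  push_cast at CS
  have fin : S * Real.log S ≤ S * (ρ * Real.log D) := by
    have e1 : (1 - q) = 1 / (n+1) := by rw [hq]; field_simp; ring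
    have e2 : 2 - ρ = 2 / (n+2) := by rw [hρ]; field_simp; ring
    rw [e1, e2, hq] at CS
    rw [hρ] at T0 ⊢
    -- CS + n/(n+1) * T0
    have h4 := mul_le_mul_of_nonneg_left T0 (show (0:ℝ) ≤ n / (n+1) by positivity)
    have h5 : (n * (n+2) / (n+1) : ℝ) * (S * Real.log S) ≤ (n * (n+2) / (n+1) : ℝ) * (S * (2 * ((n:ℝ)+1) / (n + 2) * Real.log D)) := by
      have e3 : (n * (n+2) / (n+1) : ℝ) * (S * (2 * ((n:ℝ)+1) / (n + 2) * Real.log D)) = 2 * n * (S * Real.log D) := by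
        field_simp
      have e4 : S * (2 * ((n:ℝ)/(n+1)) * (((n:ℝ)+1) * Real.log D)) = 2 * n * (S * Real.log D) := by field_simp
      have e5 : (n:ℝ) / (n+1) * (1/(n:ℝ) * sm - 1/(n:ℝ) * (S * Real.log S)) = 1/((n:ℝ)+1) * sm - 1/((n:ℝ)+1) * (S * Real.log S) := by
        field_simp
      have e6 : (n:ℝ) / (n+1) * (2 * ((n:ℝ)+1) / (n+2) * A) = 2 * n / (n+2) * A := by field_simp
      have e7 : (n:ℝ)/(n+1) * (2 / (n+2) * (((n:ℝ)+1) * A)) = 2 * n / (n+2) * A := by field_simp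
      have e8 : (n * (n+2) / (n+1) : ℝ) * (S * Real.log S) = (n+1) * (S * Real.log S) - 1/((n:ℝ)+1) * (S * Real.log S) := by
        field_simp; ring
      rw [e3, e8]
      rw [e5, e6] at h4
      rw [e4, e7] at CS
      simp only [mul_zero] at CS
      linarith
    exact le_of_mul_le_mul_left h5 (by positivity)
  have fin2 : Real.log S ≤ Real.log (D ^ ρ) := by
    rw [Real.log_rpow hDp]
    exact le_of_mul_le_mul_left fin hSpos
  exact (Real.log_le_log_iff hSpos (by positivity)).1 fin2


lemma bh_main (n N : ℕ) : ∀ (a : (Fin (n+1) → Fin N) → ℂ) (B : ℝ), 0 ≤ B →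
    (∀ z : Fin (n+1) → Fin N → ℂ, (∀ k j, ‖z k j‖ ≤ 1) → ‖∑ i, a i * ∏ k, z k (i k)‖ ≤ B) →
    ∑ i, ‖a i‖ ^ (2 * ((n:ℝ)+1) / (n + 2)) ≤
      (Real.exp (0.285 * (harmonic n : ℝ)) * B) ^ (2 * ((n:ℝ)+1) / (n + 2)) := by
  induction n with
  | zero =>
    intro a B hB h
    have e : (2 * (((0:ℕ):ℝ)+1) / (((0:ℕ):ℝ) + 2)) = 1 := by norm_num
    rw [e]
    simp only [Real.rpow_one, harmonic_zero, Rat.cast_zero, mul_zero, Real.exp_zero, one_mul]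
    have h1 := h (fun _ j => (starRingEnd ℂ) (a (fun _ => j)) / ‖a (fun _ => j)‖) (by
      intro k j
      rw [norm_div, RCLike.norm_conj, Complex.norm_real, norm_norm]
      exact div_self_le_one _)
    refine le_trans (le_of_eq ?_) h1
    have h2 : ∀ i : Fin (0+1) → Fin N, a i * ∏ k, (starRingEnd ℂ) (a (fun _ => i k)) / ‖a (fun _ => i k)‖ = ((‖a i‖ : ℝ) : ℂ) := by
      intro i
      have : (fun _ : Fin (0+1) => i 0) = i := by
        funext x; obtain rfl : x = 0 := Fin.ext (by have := x.2; simp only [Fin.val_zero]; omega)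
        rfl
      rw [Fin.prod_univ_one, this, ← mul_div_assoc, Complex.mul_conj, Complex.normSq_eq_norm_sq]
      rcases eq_or_ne (a i) 0 with h | h
      · simp [h]
      · have : ((‖a i‖ : ℝ) : ℂ) ≠ 0 := by simpa using h
        push_cast
        field_simp
    simp only [h2]
    rw [← Complex.ofReal_sum, Complex.norm_real, Real.norm_of_nonneg (Finset.sum_nonneg fun _ _ => norm_nonneg _)]
  | succ n ih =>
    intro a B hB h
    have key := bh_blei (n+1) N (by omega) (fun i => ‖a i‖) (fun i => norm_nonneg _)
      (Real.exp (0.285 * (harmonic (n+1) : ℝ)) * B) (by positivity)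
    refine key ?_
    intro k
    beta_reduce
    set p : ℝ := 2 * ((n:ℝ)+1) / (n+2) with hp
    have hpp : 0 < p := by positivity
    have hp2 : p ≤ 2 := by rw [hp, div_le_iff₀ (by positivity)]; linarith
    have eq1 : (((n+1:ℕ):ℝ)/((n+1:ℕ)+1)) = p/2 := by
      rw [hp]; push_cast; field_simp; ring
    rw [eq1, mul_div_cancel₀ _ (two_ne_zero' ℝ)]
    set K := Real.exp (0.285 * (harmonic n : ℝ)) with hK
    have hKB : (Real.exp (0.285 * (harmonic (n+1) : ℝ)) * B) ^ p = Real.exp (0.57 * (1 - p/2)) * (K * B) ^ p := by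
      have : Real.exp (0.285 * (harmonic (n+1) : ℝ)) = Real.exp (0.285 / (n+1)) * K := by
        rw [hK, ← Real.exp_add, harmonic_succ]
        congr 1
        push_cast
        field_simp
        ring
      rw [this, mul_assoc, Real.mul_rpow (by positivity) (by positivity), ← Real.exp_mul]
      congr 2
      rw [hp]; field_simp; ring
    rw [hKB]
    -- bound for each sign choice
    have hsgn : ∀ ε : Fin N → Fin 5, 
        ∑ i' : Fin (n+1) → Fin N, ‖∑ t, a (k.insertNth t i') * bhW (ε t)‖ ^ p ≤ (K * B) ^ p := by
      intro ε
      apply ih (fun i' => ∑ t, a (k.insertNth t i') * bhW (ε t)) B hB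
      intro z hz
      have := h (k.insertNth (fun t => bhW (ε t)) z) (by
        intro l j
        induction l using Fin.succAboveCases k with
        | x => simp [bhW_norm]
        | p l => simpa using hz l j)
      refine le_trans (le_of_eq ?_) this
      congr 1
      rw [← (Fin.insertNthEquiv (fun _ : Fin (n+1+1) => Fin N) k).sum_comp, Fintype.sum_prod_type_right]
      refine Finset.sum_congr rfl fun i' _ => ?_
      rw [Finset.sum_mul]
      refine Finset.sum_congr rfl fun t _ => ?_
      rw [Fin.prod_univ_succAbove _ k]
      simp [Fin.insertNthEquiv, mul_assoc]
    have hkh : ∀ i' : Fin (n+1) → Fin N, 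
        (∑ t, ‖a (k.insertNth t i')‖ ^ 2) ^ (p/2) ≤ Real.exp (0.57 * (1 - p/2)) * ((5^N)⁻¹ * 
          ∑ ε : Fin N → Fin 5, ‖∑ t, a (k.insertNth t i') * bhW (ε t)‖ ^ p) := by
      intro i'
      have h1 := bh_khinchine N (fun t => a (k.insertNth t i')) p hpp hp2
      have h5 : (0:ℝ) < 5 ^ N := by positivity
      have hex : Real.exp (0.57 * (1 - p/2)) * Real.exp (-0.57 * (1 - p/2)) = 1 := by
        rw [← Real.exp_add, ← Real.exp_zero]; congr 1; ring
      calc _ = (Real.exp (0.57 * (1 - p/2)) * Real.exp (-0.57 * (1 - p/2))) * ((5^N)⁻¹ * 5 ^ N) * (∑ t, ‖a (k.insertNth t i')‖ ^ 2) ^ (p/2) := by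
            rw [hex, inv_mul_cancel₀ h5.ne']; ring
        _ = Real.exp (0.57 * (1 - p/2)) * ((5^N)⁻¹ * (5 ^ N * (Real.exp (-0.57 * (1 - p/2)) * (∑ t, ‖a (k.insertNth t i')‖ ^ 2) ^ (p/2)))) := by ring
        _ ≤ _ := by gcongr
    refine (Finset.sum_le_sum fun i' _ => hkh i').trans ?_
    rw [← Finset.mul_sum, ← Finset.mul_sum, Finset.sum_comm]
    refine mul_le_mul_of_nonneg_left ?_ (by positivity)
    rw [inv_mul_le_iff₀ (by positivity)]
    refine (Finset.sum_le_sum fun ε _ => hsgn ε).trans ?_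
    simp

lemma bh_const (m : ℕ) (hm : 2 ^ 25 ≤ m) :
    Real.exp (0.285 * (harmonic m : ℝ)) ≤ 0.99135459597 * (m:ℝ) ^ (0.304975 : ℝ) := by
  have hm' : ((2:ℝ) ^ 25) ≤ m := by exact_mod_cast hm
  have hm0 : (0:ℝ) < m := lt_of_lt_of_le (by norm_num) hm'
  have h1 := harmonic_le_one_add_log m
  have h2 : 25 * Real.log 2 ≤ Real.log m := by
    have := Real.log_le_log (by norm_num) hm'
    rwa [Real.log_pow] at this
  have h3 := Real.log_two_gt_d9
  have h4 : -0.01 ≤ Real.log 0.99135459597 := by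
    have := Real.one_sub_inv_le_log_of_pos (show (0:ℝ) < 0.99135459597 by norm_num)
    refine le_trans ?_ this
    norm_num
  have h5 : (0.99135459597:ℝ) * (m:ℝ) ^ (0.304975 : ℝ) = Real.exp (Real.log 0.99135459597 + Real.log m * 0.304975) := by
    rw [Real.exp_add, Real.exp_log (by norm_num), Real.rpow_def_of_pos hm0]
  rw [h5]
  apply Real.exp_le_exp.2
  norm_num at *
  linarith

theorem stmt15 (n : ℕ) (hn : 2 ^ 25 < n) (N : ℕ) (hN : 0 < N)
    (U : ContinuousMultilinearMap ℂ (fun _ : Fin n => (Fin N → ℂ)) ℂ) :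
    BHcomplex n N U ≤ 0.99135459597 * ((n : ℝ) - 1) ^ (0.304975 : ℝ) * ‖U‖ := by
  obtain ⟨m, rfl⟩ : ∃ m, n = m + 1 := ⟨n - 1, by omega⟩
  have hU : ∀ z : Fin (m+1) → Fin N → ℂ, (∀ k j, ‖z k j‖ ≤ 1) →
      ‖∑ i : Fin (m+1) → Fin N, U (fun k => Pi.single (i k) (1 : ℂ)) * ∏ k, z k (i k)‖ ≤ ‖U‖ := by
    intro z hz
    have e : ∑ i : Fin (m+1) → Fin N, U (fun k => Pi.single (i k) (1 : ℂ)) * ∏ k, z k (i k) = U z := by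
      have hz' : z = fun k => ∑ j, z k j • (Pi.single j (1:ℂ) : Fin N → ℂ) := by
        funext k
        exact pi_eq_sum_univ' (z k)
      conv_rhs => rw [hz']
      rw [ContinuousMultilinearMap.map_sum]
      refine Finset.sum_congr rfl fun i _ => ?_
      rw [ContinuousMultilinearMap.map_smul_univ, smul_eq_mul, mul_comm]
    rw [e]
    refine (U.le_opNorm z).trans ?_
    refine mul_le_of_le_one_right (norm_nonneg _) ?_
    refine Finset.prod_le_one (fun _ _ => norm_nonneg _) fun k _ => ?_
    exact (pi_norm_le_iff_of_nonneg zero_le_one).2 (hz k)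
  have h := bh_main m N (fun i => U (fun k => Pi.single (i k) (1 : ℂ))) ‖U‖ (norm_nonneg _) hU
  have hc := bh_const m (by omega)
  unfold BHcomplex
  push_cast
  rw [show ((m:ℝ) + 1 + 1) = m + 2 by ring, show ((m:ℝ) + 1 - 1) = m by ring]
  have hρ : (0:ℝ) < (m + 2) / (2 * (m + 1)) := by positivity
  refine (Real.rpow_le_rpow (Finset.sum_nonneg fun _ _ => by positivity) h hρ.le).trans ?_
  rw [← Real.rpow_mul (by positivity)]
  have e1 : (2 * ((m:ℝ)+1) / (m+2)) * ((m + 2) / (2 * (m + 1))) = 1 := by field_simp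
  rw [e1, Real.rpow_one]
  exact mul_le_mul_of_nonneg_right hc (norm_nonneg _)
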